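/- arXiv:math/0011137 — 4 statements merged into one kernel-verified Lean document; each statement's English description precedes it below -/
import Mathlib

section
/- Let V = ⊕_{p=0}^k V_{2p} be a finite-dimensional graded ℂ-vector space with dim V₀ = 1, and let {e₀,…,e_m} be a basis of homogeneous elements with e₀ ∈ V₀. Let φ₀ ∈ ℂ[z₀,…,z_m] be a cubic form such that every monomial z_a z_b z_c occurring with nonzero coefficient satisfies deg e_a + deg e_b + deg e_c = 2k, and write φ_{abc} := ∂³φ₀/∂z_a∂z_b∂z_c (constants). Suppose the symmetric matrix g_{ab} := φ_{0ab} is invertible, so that B(e_a,e_b) := g_{ab} defines a nondegenerate symmetric bilinear form on V, with B-dual basis e_a^B = Σ_b h_{ba}e_b (B(e_a^B,e_b) = δ_{ab}), and suppose Σ_{d,f} φ_{abd}·h_{df}·φ_{fcg} = Σ_{d,f} φ_{bcd}·h_{df}·φ_{afg} for all a,b,c,g. Then the bilinear product defined on the basis by e_a * e_b := Σ_c φ_{abc}·e_c^B makes (V,*,e₀,B) a graded Frobenius algebra of weight k. -/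
/-!
Write `φ a b c` for the third partials of `Φ`. Since partial derivatives of a smooth function
commute, `φ` is totally symmetric, and the definition of the product through the `B`-dual basis
says exactly that `B (e_a * e_b) e_c = φ a b c`. As `B` is symmetric and has a dual basis, an
element is determined by its pairings with the `e_c`, so every algebraic axiom is verified
after pairing: commutativity and invariance are the symmetry of `φ`, the unit law is
`B e_a e_b = φ 0 a b`, and associativity is the hypothesis on `φ` and `h` (with `h` symmetric,
because `h a b = B (eB a) (eB b)`).

For the grading, `W p` is spanned by the `e_a` of degree `p` (`mem_span_of_internal`), which gives
orthogonality. Conversely, by nondegeneracy an element orthogonal to all `e_b` with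
`d b + r ≠ k` lies in `W r`; applied to `e_a * e_b` and `r = d a + d b` this gives
multiplicativity of the grading.
-/

open Module

noncomputable section

/-- A graded Frobenius algebra of weight `k` over `ℂ`: a finite-dimensional commutative
associative `ℂ`-algebra `(V, mul)` with unit `e₀`, a nondegenerate symmetric bilinear form `B`
with `B (u*v) w = B u (v*w)`, and a direct sum decomposition `V = ⊕_{p=0}^k V_{2p}` (here
`W p` plays the role of `V_{2p}`, and `W p = ⊥` for `p > k`) with `dim V₀ = 1`, `e₀ ∈ V₀`,
`V_{2p} * V_{2q} ⊆ V_{2(p+q)}`, and `B(V_{2p}, V_{2q}) = 0` for `p + q ≠ k`. -/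
structure IsGradedFrobenius {V : Type*} [AddCommGroup V] [Module ℂ V]
    (k : ℕ) (W : ℕ → Submodule ℂ V)
    (mul : V →ₗ[ℂ] V →ₗ[ℂ] V) (e₀ : V) (B : V →ₗ[ℂ] V →ₗ[ℂ] ℂ) : Prop where
  finite : FiniteDimensional ℂ V
  comm : ∀ u v : V, mul u v = mul v u
  assoc : ∀ u v w : V, mul (mul u v) w = mul u (mul v w)
  one_mul : ∀ v : V, mul e₀ v = v
  symm : ∀ u v : V, B u v = B v u
  nondeg : ∀ u : V, (∀ v : V, B u v = 0) → u = 0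
  frob : ∀ u v w : V, B (mul u v) w = B u (mul v w)
  internal : DirectSum.IsInternal W
  bounded : ∀ p : ℕ, k < p → W p = ⊥
  dim_bottom : Module.finrank ℂ (W 0) = 1
  unit_mem : e₀ ∈ W 0
  mul_mem : ∀ p q : ℕ, ∀ u ∈ W p, ∀ v ∈ W q, mul u v ∈ W (p + q)
  orthogonal : ∀ p q : ℕ, p + q ≠ k → ∀ u ∈ W p, ∀ v ∈ W q, B u v = 0

/-- The partial derivative `∂f/∂z_a` of a scalar function of finitely many complex
variables, as a directional derivative. -/
def pd {ι : Type*} [Fintype ι] [DecidableEq ι] (a : ι) (f : (ι → ℂ) → ℂ) :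
    (ι → ℂ) → ℂ :=
  fun z => fderiv ℂ f z (Pi.single a 1)

lemma pd_contDiff {ι : Type*} [Fintype ι] [DecidableEq ι] (a : ι) {f : (ι → ℂ) → ℂ}
    (hf : ContDiff ℂ (⊤ : ℕ∞) f) : ContDiff ℂ (⊤ : ℕ∞) (pd a f) := by
  unfold pd
  exact (hf.fderiv_right (m := (⊤ : ℕ∞)) (by simp)).clm_apply contDiff_const

lemma pd_comm {ι : Type*} [Fintype ι] [DecidableEq ι] (a b : ι) {f : (ι → ℂ) → ℂ}
    (hf : ContDiff ℂ (⊤ : ℕ∞) f) : pd a (pd b f) = pd b (pd a f) := by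
  have hd : Differentiable ℂ (fderiv ℂ f) :=
    (hf.fderiv_right (m := (⊤ : ℕ∞)) (by simp)).differentiable (by simp)
  have key : ∀ (a b : ι) (z : ι → ℂ), pd a (pd b f) z
      = fderiv ℂ (fderiv ℂ f) z (Pi.single a 1) (Pi.single b 1) := by
    intro a b z
    unfold pd
    rw [fderiv_clm_apply (hd z) (differentiableAt_const _)]
    simp
  funext z
  rw [key, key]
  exact (hf.contDiffAt.isSymmSndFDerivAt
    (by simp only [minSmoothness_of_isRCLikeNormedField]; exact WithTop.coe_le_coe.2 (le_top (a := (2 : ℕ∞))))).eq _ _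

lemma basis_ind {ι V : Type*} [AddCommGroup V] [Module ℂ V] (e : Basis ι ℂ V) {P : V → Prop}
    (he : ∀ a, P (e a)) (hz : P 0) (hadd : ∀ x y, P x → P y → P (x + y))
    (hsmul : ∀ (t : ℂ) x, P x → P (t • x)) (v : V) : P v := by
  have hv : v ∈ Submodule.span ℂ (Set.range e) := by rw [e.span_eq]; trivial
  induction hv using Submodule.span_induction with
  | mem x hx => obtain ⟨a, rfl⟩ := hx; exact he a
  | zero => exact hz
  | add x y _ _ hx hy => exact hadd x y hx hy
  | smul t x _ hx => exact hsmul t x hx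

/-- Each graded piece is spanned by the elements of a homogeneous basis lying in it: apply the
projection to the piece to the basis expansion. -/
lemma mem_span_of_internal {ι V : Type*} [Fintype ι] [AddCommGroup V] [Module ℂ V]
    (W : ℕ → Submodule ℂ V) (hW : DirectSum.IsInternal W) (e : Basis ι ℂ V) (d : ι → ℕ)
    (hdeg : ∀ a, e a ∈ W (d a)) {p : ℕ} {u : V} (hu : u ∈ W p) :
    u ∈ Submodule.span ℂ (e '' {a | d a = p}) := by
  let _ := hW.chooseDecomposition
  have h1 : ∀ v : V, ((DirectSum.decompose W v p : W p) : V)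
      ∈ Submodule.span ℂ (e '' {a | d a = p}) := by
    intro v
    induction v using basis_ind e with
    | he a =>
      by_cases hp : d a = p
      · subst hp
        rw [DirectSum.decompose_of_mem_same W (hdeg a)]
        exact Submodule.subset_span ⟨a, rfl, rfl⟩
      · rw [DirectSum.decompose_of_mem_ne W (hdeg a) hp]
        exact Submodule.zero_mem _
    | hz => simp
    | hadd x y hx hy =>
      simpa [DirectSum.decompose_add] using Submodule.add_mem _ hx hy
    | hsmul t x hx =>
      rw [DirectSum.decompose_smul]
      exact Submodule.smul_mem _ t hx
  have h2 := h1 u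
  rwa [DirectSum.decompose_of_mem_same W hu] at h2

/-- converse of Theorem `thm:prod_pot`: Let `V = ⊕_{p=0}^k V_{2p}` be a graded
vector space (`W p` plays the role of `V_{2p}`) with `dim V₀ = 1`, `{e₀,…,e_m}` a homogeneous
basis with `e₀ ∈ V₀`, and `Φ` a cubic form (a polynomial `Σ c_{abc} z_a z_b z_c`) which is
weighted homogeneous of degree `2k`: every monomial `z_a z_b z_c` with nonzero coefficient —
equivalently every nonvanishing third partial `φ_{abc} := ∂³Φ/∂z_a∂z_b∂z_c` (a constant) —
satisfies `deg e_a + deg e_b + deg e_c = 2k`.  If the matrix `g_{ab} := φ_{0ab}` is invertible,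
`B` is the bilinear form with `B(e_a,e_b) = g_{ab}` (with `B`-dual basis
`e_a^B = Σ_b h_{ba} e_b`), and the associativity relations
`Σ_{d,f} φ_{abd} h_{df} φ_{fcg} = Σ_{d,f} φ_{bcd} h_{df} φ_{afg}` hold, then the bilinear
product with `e_a * e_b = Σ_c φ_{abc} e_c^B` makes `(V,*,e₀,B)` a graded Frobenius algebra of
weight `k`. -/
theorem statement3 {V : Type*} [AddCommGroup V] [Module ℂ V]
    (k m : ℕ) (W : ℕ → Submodule ℂ V)
    -- the graded vector space structure
    (hinternal : DirectSum.IsInternal W)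
    (hbounded : ∀ p : ℕ, k < p → W p = ⊥)
    (hdim : Module.finrank ℂ (W 0) = 1)
    -- the homogeneous basis, with `e 0 = e₀ ∈ V₀`
    (e : Basis (Fin (m + 1)) ℂ V) (d : Fin (m + 1) → ℕ)
    (hdeg : ∀ a, e a ∈ W (d a)) (hd0 : d 0 = 0)
    -- `Φ` is a cubic form
    (Φ : (Fin (m + 1) → ℂ) → ℂ)
    (hcubic : ∃ coef : Fin (m + 1) → Fin (m + 1) → Fin (m + 1) → ℂ,
      ∀ z : Fin (m + 1) → ℂ, Φ z = ∑ a, ∑ b, ∑ c, coef a b c * z a * z b * z c)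
    -- weighted homogeneity of degree 2k
    (hweight : ∀ a b c : Fin (m + 1),
      pd a (pd b (pd c Φ)) 0 ≠ 0 → 2 * d a + 2 * d b + 2 * d c = 2 * k)
    -- the matrix `g_{ab} = φ_{0ab}` is invertible
    (hg : IsUnit (Matrix.det (Matrix.of fun a b : Fin (m + 1) =>
      pd 0 (pd a (pd b Φ)) 0)))
    -- `B` is the bilinear form defined by `B(e_a, e_b) = g_{ab}`
    (B : V →ₗ[ℂ] V →ₗ[ℂ] ℂ)
    (hB : ∀ a b : Fin (m + 1), B (e a) (e b) = pd 0 (pd a (pd b Φ)) 0)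
    -- the B-dual basis `eB` and the matrix `h` with `eB a = Σ_b h b a • e b`
    (eB : Fin (m + 1) → V)
    (heB : ∀ a b, B (eB a) (e b) = if a = b then 1 else 0)
    (h : Fin (m + 1) → Fin (m + 1) → ℂ)
    (hh : ∀ a, eB a = ∑ b, h b a • e b)
    -- the associativity (WDVV) relations
    (hassoc : ∀ a b c g : Fin (m + 1),
      (∑ d' : Fin (m + 1), ∑ f : Fin (m + 1),
        pd a (pd b (pd d' Φ)) 0 * h d' f * pd f (pd c (pd g Φ)) 0) =
      (∑ d' : Fin (m + 1), ∑ f : Fin (m + 1),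
        pd b (pd c (pd d' Φ)) 0 * h d' f * pd a (pd f (pd g Φ)) 0))
    -- the product defined on the basis by `e_a * e_b = Σ_c φ_{abc} e_c^B`
    (mul : V →ₗ[ℂ] V →ₗ[ℂ] V)
    (hmul : ∀ a b : Fin (m + 1),
      mul (e a) (e b) = ∑ c, pd a (pd b (pd c Φ)) 0 • eB c) :
    IsGradedFrobenius k W mul (e 0) B := by
  classical
  have hsm : ContDiff ℂ (⊤ : ℕ∞) Φ := by
    obtain ⟨coef, hc⟩ := hcubic
    rw [show Φ = _ from funext hc]
    fun_prop
  obtain ⟨φ, hφ⟩ : ∃ φ : Fin (m + 1) → Fin (m + 1) → Fin (m + 1) → ℂ,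
      ∀ a b c, pd a (pd b (pd c Φ)) 0 = φ a b c := ⟨_, fun _ _ _ => rfl⟩
  have s1 : ∀ a b c, φ a b c = φ b a c := fun a b c => by
    rw [← hφ, ← hφ, pd_comm a b (pd_contDiff c hsm)]
  have s2 : ∀ a b c, φ a b c = φ a c b := fun a b c => by
    rw [← hφ, ← hφ, pd_comm b c hsm]
  simp only [hφ] at hweight hB hassoc hmul
  have symm : ∀ u v : V, B u v = B v u := by
    have : B = B.flip := e.ext fun a => e.ext fun b => by
      rw [LinearMap.flip_apply, hB, hB, s2]
    intro u v
    exact congrArg (fun F => F u v) this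
  have nondeg' : ∀ u : V, (∀ b, B u (e b) = 0) → u = 0 := by
    intro u hu
    have hu' : B u = 0 := e.ext fun b => by simpa using hu b
    refine e.ext_elem fun a => ?_
    -- pairing with the dual vector `eB a` reads off the `a`-th coordinate
    have h1 : B (eB a) u = e.repr u a := by
      conv_lhs => rw [← e.sum_repr u]
      simp only [map_sum, map_smul, heB]
      simp
    rw [← h1, symm, hu']
    simp
  have sep : ∀ u v : V, (∀ b, B u (e b) = B v (e b)) → u = v := fun u v huv =>
    sub_eq_zero.1 (nondeg' _ fun b => by simp [huv b])
  have hBm : ∀ a b c, B (mul (e a) (e b)) (e c) = φ a b c := by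
    intro a b c
    simp [hmul, heB]
  have hsymm : ∀ a b, h a b = h b a := by
    have h1 : ∀ a b, B (eB a) (eB b) = h a b := fun a b => by
      rw [hh b]; simp [heB]
    intro a b
    rw [← h1, ← h1, symm]
  have hmul' : ∀ a b, mul (e a) (e b) = ∑ x, ∑ f, (φ a b x * h x f) • e f := by
    intro a b
    rw [hmul]
    refine Finset.sum_congr rfl fun x _ => ?_
    rw [hh, Finset.smul_sum]
    refine Finset.sum_congr rfl fun f _ => ?_
    rw [smul_smul, hsymm f x]
  have comm : ∀ u v : V, mul u v = mul v u := by
    have : mul = mul.flip := e.ext fun a => e.ext fun b => sep _ _ fun c => by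
      rw [LinearMap.flip_apply, hBm, hBm, s1]
    intro u v
    exact congrArg (fun F => F u v) this
  have orth : ∀ a b, d a + d b ≠ k → B (e a) (e b) = 0 := by
    intro a b hab
    rw [hB]
    by_contra hne
    have := hweight _ _ _ hne
    omega
  -- an element orthogonal to all `e b` of degree other than `k - r` is homogeneous of degree `r`
  have mem_of : ∀ (r : ℕ) (x : V), (∀ b, d b + r ≠ k → B x (e b) = 0) → x ∈ W r := by
    intro r x hx
    have hxx : x = ∑ f, if d f = r then e.repr x f • e f else 0 := by
      refine sep _ _ fun b => ?_
      by_cases hb : d b + r = k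
      · conv_lhs => rw [← e.sum_repr x]
        simp only [map_sum, LinearMap.sum_apply]
        refine Finset.sum_congr rfl fun f _ => ?_
        split_ifs with hf
        · rfl
        · simp [orth f b (by omega)]
      · rw [hx b hb]
        simp only [map_sum, LinearMap.sum_apply]
        symm
        refine Finset.sum_eq_zero fun f _ => ?_
        split_ifs with hf
        · simp [orth f b (by omega)]
        · simp
    rw [hxx]
    refine Submodule.sum_mem _ fun f _ => ?_
    split_ifs with hf
    · exact Submodule.smul_mem _ _ (hf ▸ hdeg f)
    · exact Submodule.zero_mem _
  have hspan : ∀ {p : ℕ} {u : V}, u ∈ W p → u ∈ Submodule.span ℂ (e '' {a | d a = p}) :=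
    fun hu => mem_span_of_internal W hinternal e d hdeg hu
  refine
    { finite := Module.Finite.of_basis e
      comm := comm
      assoc := ?_
      one_mul := ?_
      symm := symm
      nondeg := fun u hu => nondeg' u fun b => hu _
      frob := ?_
      internal := hinternal
      bounded := hbounded
      dim_bottom := hdim
      unit_mem := by simpa [hd0] using hdeg 0
      mul_mem := ?_
      orthogonal := ?_ }
  · intro u v w
    induction u using basis_ind e with
    | hz => simp
    | hadd x y hx hy => simp [hx, hy]
    | hsmul t x hx => simp [hx]
    | he a =>
    induction v using basis_ind e with
    | hz => simp
    | hadd x y hx hy => simp [hx, hy]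
    | hsmul t x hx => simp [hx]
    | he b =>
    induction w using basis_ind e with
    | hz => simp
    | hadd x y hx hy => simp [hx, hy]
    | hsmul t x hx => simp [hx]
    | he c =>
    refine sep _ _ fun g => ?_
    rw [hmul' a b, hmul' b c]
    simp only [map_sum, LinearMap.sum_apply, map_smul, LinearMap.smul_apply, hBm, smul_eq_mul]
    exact hassoc a b c g
  · intro v
    induction v using basis_ind e with
    | hz => simp
    | hadd x y hx hy => simp [hx, hy]
    | hsmul t x hx => simp [hx]
    | he a => exact sep _ _ fun b => by rw [hBm, hB]
  · intro u v w
    induction u using basis_ind e with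
    | hz => simp
    | hadd x y hx hy => simp [hx, hy]
    | hsmul t x hx => simp [hx]
    | he a =>
    induction v using basis_ind e with
    | hz => simp
    | hadd x y hx hy => simp [hx, hy]
    | hsmul t x hx => simp [hx]
    | he b =>
    induction w using basis_ind e with
    | hz => simp
    | hadd x y hx hy => simp [hx, hy]
    | hsmul t x hx => simp [hx]
    | he c => rw [symm (e a), hBm, hBm, s1, s2]
  · intro p q u hu v hv
    replace hu := hspan hu
    replace hv := hspan hv
    induction hu using Submodule.span_induction with
    | zero => simp
    | add x y _ _ hx hy => simpa using Submodule.add_mem _ hx hy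
    | smul t x _ hx => simpa using Submodule.smul_mem _ t hx
    | mem x hx =>
    obtain ⟨a, rfl, rfl⟩ := hx
    induction hv using Submodule.span_induction with
    | zero => simp
    | add x y _ _ hx hy => simpa using Submodule.add_mem _ hx hy
    | smul t x _ hx => simpa using Submodule.smul_mem _ t hx
    | mem x hx =>
    obtain ⟨b, rfl, rfl⟩ := hx
    refine mem_of _ _ fun c hc => ?_
    rw [hBm]
    by_contra hne
    have := hweight _ _ _ hne
    omega
  · intro p q hpq u hu v hv
    replace hu := hspan hu
    replace hv := hspan hv
    induction hu using Submodule.span_induction with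
    | zero => simp
    | add x y _ _ hx hy => simp [hx, hy]
    | smul t x _ hx => simp [hx]
    | mem x hx =>
    obtain ⟨a, rfl, rfl⟩ := hx
    induction hv using Submodule.span_induction with
    | zero => simp
    | add x y _ _ hx hy => simp [hx, hy]
    | smul t x _ hx => simp [hx]
    | mem x hx =>
    obtain ⟨b, rfl, rfl⟩ := hx
    exact orth a b hpq
end
end

section
/- Let V = ⊕_{p=0}^4 V^p be a finite-dimensional graded ℂ-vector space, Q a nondegenerate symmetric bilinear form on V with Q(V^p,V^q) = 0 whenever p+q ≠ 4, and N₁,…,N_r pairwise commuting endomorphisms of V such that N_j(V^p) ⊆ V^{p−1} for all p (with V^{−1} := 0) and Q(N_j u, v) + Q(u, N_j v) = 0 for all u,v ∈ V and all j. Assume dim V^4 = 1, fix a nonzero e₀ ∈ V^4 and e₀* ∈ V^0 with Q(e₀, e₀*) = 1, and assume that N₁(e₀),…,N_r(e₀) form a basis of V^3. Define the grading V_{2a} := V^{4−a} (a = 0,…,4) and the bilinear form B by B(u,v) := (−1)^a Q(u,v) for u ∈ V_{2a}, v ∈ V. Then there exists a unique product * on V such that (V,*,e₀,B) is a graded Frobenius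 algebra of weight 4 (for the grading V = ⊕_{a=0}^4 V_{2a}) satisfying: (i) N_j(e₀) * v = N_j(v) for all v ∈ V and all j = 1,…,r; and (ii) v₁ * v₂ = B(v₁,v₂)·e₀* for all v₁,v₂ ∈ V^2. -/
/-!
Put `W a = V_{2a}`. In terms of `W` and `B` the operators `N j` raise the degree by one, commute
and are self-adjoint for `B`. The requirements leave no freedom: multiplication by
`W 0 = ℂ e₀` is scalar, multiplication by `W 1 = span (N j e₀)` is given by the `N j`, the product
`W 2 × W 2 → W 4` is prescribed, and all other products of elements of degree at least two vanish
for degree reasons (`frobenius_product_unique`).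

For existence, let `n : V → End V` be the linear map which sends `N j e₀` to `N j` and vanishes
outside degree one, let `ε` be the coefficient of `e₀` and `π` the projection to `W 2`. The product
is
`u * v = ε u v + ε v (u - ε u e₀) + n u (v - ε v e₀) + n v (u - ε u e₀ - n u e₀)
  + B (π u) (π v) e₀*`,
which is commutative because the `n u` commute. Associativity is checked on homogeneous elements.
For degree reasons only the degrees `(1,1,1)`, `(1,1,2)`, `(1,2,1)`, `(2,1,1)` matter, and there it
follows from commutativity and self-adjointness of the `n u`, together with `x = B x e₀ e₀*` for
`x ∈ W 4`, which is nondegeneracy of `B`. Finally `B u v = B (u * v) e₀`, so the Frobenius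
identity is a consequence of associativity.
-/

open Module

noncomputable section

section Construction

variable {V : Type*} [AddCommGroup V] [Module ℂ V]

/-- Induction over homogeneous elements, for a grading concentrated in degrees `0, …, 4`. -/
lemma homogeneous_induction {W : ℕ → Submodule ℂ V} (hW : DirectSum.IsInternal W)
    (hbd : ∀ p, 4 < p → W p = ⊥) {P : V → Prop}
    (hom : ∀ p ≤ 4, ∀ u ∈ W p, P u) (add : ∀ u v, P u → P v → P (u + v)) (u : V) : P u := by
  have hu : u ∈ iSup W := by rw [hW.submodule_iSup_eq_top]; trivial
  have h0 : P 0 := hom 0 (by norm_num) 0 (zero_mem _)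
  refine Submodule.iSup_induction W (motive := P) hu (fun p x hx => ?_) h0 add
  by_cases hp : p ≤ 4
  · exact hom p hp x hx
  · rw [hbd p (by omega), Submodule.mem_bot] at hx
    rwa [hx]

lemma exists_projection {W : ℕ → Submodule ℂ V} (hW : DirectSum.IsInternal W) (i : ℕ) :
    ∃ π : V →ₗ[ℂ] V, (∀ u ∈ W i, π u = u) ∧ ∀ j ≠ i, ∀ u ∈ W j, π u = 0 := by
  let e := LinearEquiv.ofBijective (DirectSum.coeLinearMap W) hW
  have he : ∀ j (u : V) (hu : u ∈ W j), e.symm u = DirectSum.lof ℂ ℕ (fun i => W i) j ⟨u, hu⟩ := by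
    intro j u hu
    rw [LinearEquiv.symm_apply_eq]
    change u = DirectSum.coeLinearMap W _
    simp
  refine ⟨(W i).subtype ∘ₗ DirectSum.component ℂ ℕ (fun i => W i) i ∘ₗ e.symm.toLinearMap,
    fun u hu => ?_, fun j hj u hu => ?_⟩
  · simp [he i u hu, DirectSum.component.lof_self]
  · simp [he j u hu, DirectSum.component.of, hj]

/-- The linear map `n : V → End V` with `n (N j e₀) = N j` which vanishes outside degree one. -/
lemma exists_degree_one_action {r : ℕ} {W : ℕ → Submodule ℂ V} (hW : DirectSum.IsInternal W)
    {N : Fin r → (V →ₗ[ℂ] V)} {e₀ : V}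
    (hli : LinearIndependent ℂ (fun j : Fin r => N j e₀))
    (hN1 : ∀ j, N j e₀ ∈ W 1) :
    ∃ n : V →ₗ[ℂ] (V →ₗ[ℂ] V), (∀ j, n (N j e₀) = N j) ∧ (∀ p ≠ 1, ∀ u ∈ W p, n u = 0) ∧
      ∀ u, n u ∈ Submodule.span ℂ (Set.range N) := by
  obtain ⟨π, hπ, hπ'⟩ := exists_projection hW 1
  obtain ⟨g, hg⟩ := LinearMap.exists_leftInverse_of_injective
    (Finsupp.linearCombination ℂ (fun j : Fin r => N j e₀)) (LinearMap.ker_eq_bot.mpr hli)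
  refine ⟨Finsupp.linearCombination ℂ N ∘ₗ g ∘ₗ π, fun j => ?_, fun p hp u hu => ?_, fun u => ?_⟩
  · have := LinearMap.congr_fun hg (Finsupp.single j 1)
    simp only [LinearMap.comp_apply, Finsupp.linearCombination_single, one_smul,
      LinearMap.id_apply] at this
    simp [hπ _ (hN1 j), this]
  · simp [hπ' p hp u hu]
  · rw [← Finsupp.range_linearCombination]
    exact ⟨_, rfl⟩

variable {r : ℕ} {W : ℕ → Submodule ℂ V} {B : V →ₗ[ℂ] V →ₗ[ℂ] ℂ} {N : Fin r → (V →ₗ[ℂ] V)}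
  {e₀ e₀s : V}

lemma frobenius_product_unique
    (h0 : ∀ u ∈ W 0, ∃ c : ℂ, u = c • e₀)
    (hspan : Submodule.span ℂ (Set.range fun j : Fin r => N j e₀) = W 1)
    {m m' : V →ₗ[ℂ] V →ₗ[ℂ] V}
    (hm : IsGradedFrobenius 4 W m e₀ B) (hm' : IsGradedFrobenius 4 W m' e₀ B)
    (hN : ∀ j v, m (N j e₀) v = N j v) (hN' : ∀ j v, m' (N j e₀) v = N j v)
    (h2 : ∀ u ∈ W 2, ∀ v ∈ W 2, m u v = B u v • e₀s)
    (h2' : ∀ u ∈ W 2, ∀ v ∈ W 2, m' u v = B u v • e₀s) : m = m' := by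
  have key0 : ∀ u ∈ W 0, ∀ v, m u v = m' u v := by
    intro u hu v
    obtain ⟨c, rfl⟩ := h0 u hu
    simp [hm.one_mul, hm'.one_mul]
  have key1 : ∀ u ∈ W 1, ∀ v, m u v = m' u v := by
    intro u hu v
    rw [← hspan] at hu
    induction hu using Submodule.span_induction with
    | mem x hx => obtain ⟨j, rfl⟩ := hx; simp [hN, hN']
    | zero => simp
    | add x y _ _ hx hy => simp [hx, hy]
    | smul c x _ hx => simp [hx]
  ext u v
  induction u using homogeneous_induction hm.internal hm.bounded with
  | add x y hx hy => simp [hx, hy]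
  | hom p hp u hu =>
  induction v using homogeneous_induction hm.internal hm.bounded with
  | add x y hx hy => simp [hx, hy]
  | hom q hq v hv =>
  by_cases hpq : 4 < p + q
  · have a := hm.mul_mem p q u hu v hv
    have b := hm'.mul_mem p q u hu v hv
    rw [hm.bounded _ hpq, Submodule.mem_bot] at a b
    rw [a, b]
  · obtain rfl | rfl | rfl | rfl | ⟨rfl, rfl⟩ :
        p = 0 ∨ p = 1 ∨ q = 0 ∨ q = 1 ∨ (p = 2 ∧ q = 2) := by omega
    · exact key0 u hu v
    · exact key1 u hu v
    · rw [hm.comm, hm'.comm]; exact key0 v hv u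
    · rw [hm.comm, hm'.comm]; exact key1 v hv u
    · rw [h2 u hu v hv, h2' u hu v hv]

/-- Existence and uniqueness of the product, in terms of the grading `W a = V_{2a}` and of `B`. -/
lemma existsUnique_frobenius_product [FiniteDimensional ℂ V]
    (hW : DirectSum.IsInternal W) (hbd : ∀ p, 4 < p → W p = ⊥)
    (hsymm : ∀ u v, B u v = B v u) (hnd : ∀ u, (∀ v, B u v = 0) → u = 0)
    (horth : ∀ p q : ℕ, p + q ≠ 4 → ∀ u ∈ W p, ∀ v ∈ W q, B u v = 0)
    (hcomm : ∀ i j v, N i (N j v) = N j (N i v))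
    (hdeg : ∀ j p, ∀ v ∈ W p, N j v ∈ W (p + 1))
    (hadj : ∀ j u v, B (N j u) v = B u (N j v))
    (hdim : Module.finrank ℂ (W 0) = 1) (he₀ : e₀ ∈ W 0) (he₀s : e₀s ∈ W 4)
    (hpair : B e₀ e₀s = 1)
    (hli : LinearIndependent ℂ (fun j : Fin r => N j e₀))
    (hspan : Submodule.span ℂ (Set.range fun j : Fin r => N j e₀) = W 1) :
    ∃! mul : V →ₗ[ℂ] V →ₗ[ℂ] V,
      IsGradedFrobenius 4 W mul e₀ B ∧ (∀ j v, mul (N j e₀) v = N j v) ∧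
      (∀ u ∈ W 2, ∀ v ∈ W 2, mul u v = B u v • e₀s) := by
  have he₀ne : e₀ ≠ 0 := by rintro rfl; simp at hpair
  have h0 : ∀ u ∈ W 0, ∃ c : ℂ, u = c • e₀ := by
    intro u hu
    obtain ⟨c, hc⟩ := exists_smul_eq_of_finrank_eq_one hdim
      (x := (⟨e₀, he₀⟩ : W 0)) (by simpa [Subtype.ext_iff] using he₀ne) ⟨u, hu⟩
    exact ⟨c, by simpa using (congrArg Subtype.val hc).symm⟩
  have h4 : ∀ x ∈ W 4, x = B x e₀ • e₀s := by
    intro x hx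
    rw [← sub_eq_zero]
    refine hnd _ fun v => ?_
    induction v using homogeneous_induction hW hbd with
    | add a b ha hb => rw [map_add, ha, hb, add_zero]
    | hom p hp v hv =>
    by_cases hp0 : p = 0
    · subst hp0
      obtain ⟨c, rfl⟩ := h0 v hv
      simp [hsymm e₀s, hpair]
    · exact horth 4 p (by omega) _ (sub_mem hx ((W 4).smul_mem _ he₀s)) v hv
  obtain ⟨n, hnN, hn0, hns⟩ := exists_degree_one_action hW hli fun j => hdeg j 0 e₀ he₀
  obtain ⟨π, hπ, hπ0⟩ := exists_projection hW 2
  have hn1 : ∀ u ∈ W 1, n u e₀ = u := by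
    intro u hu
    rw [← hspan] at hu
    induction hu using Submodule.span_induction with
    | mem x hx => obtain ⟨j, rfl⟩ := hx; simp [hnN]
    | zero => simp
    | add x y _ _ hx hy => simp [hx, hy]
    | smul c x _ hx => simp [hx]
  have hndeg : ∀ u p, ∀ v ∈ W p, n u v ∈ W (p + 1) := by
    intro u p v hv
    have h := hns u
    generalize n u = f at h ⊢
    induction h using Submodule.span_induction with
    | mem x hx => obtain ⟨j, rfl⟩ := hx; exact hdeg j p v hv
    | zero => simp
    | add x y _ _ hx hy => exact add_mem hx hy
    | smul c x _ hx => exact Submodule.smul_mem _ c hx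
  have hnadj : ∀ u v w, B (n u v) w = B v (n u w) := by
    intro u v w
    have h := hns u
    generalize n u = f at h ⊢
    induction h using Submodule.span_induction with
    | mem x hx => obtain ⟨j, rfl⟩ := hx; exact hadj j v w
    | zero => simp
    | add x y _ _ hx hy => simp [hx, hy]
    | smul c x _ hx => simp [hx]
  have hncomm : ∀ u v w, n u (n v w) = n v (n u w) := by
    intro u v w
    have aux : ∀ j, N j (n v w) = n v (N j w) := by
      intro j
      have h := hns v
      generalize n v = f at h ⊢
      induction h using Submodule.span_induction with
      | mem x hx => obtain ⟨i, rfl⟩ := hx; exact hcomm j i w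
      | zero => simp
      | add x y _ _ hx hy => simp [hx, hy]
      | smul c x _ hx => simp [hx]
    have h := hns u
    generalize n u = f at h ⊢
    induction h using Submodule.span_induction with
    | mem x hx => obtain ⟨j, rfl⟩ := hx; exact aux j
    | zero => simp
    | add x y _ _ hx hy => simp [hx, hy]
    | smul c x _ hx => simp [hx]
  have hε : ∀ p ≠ 0, ∀ u ∈ W p, B u e₀s = 0 := fun p hp u hu =>
    horth p 4 (by omega) u hu e₀s he₀s
  -- `B u e₀s` is the coefficient of `e₀` in `u`.
  obtain ⟨m, hm⟩ : ∃ m : V →ₗ[ℂ] V →ₗ[ℂ] V, ∀ u v, m u v =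
      B u e₀s • v + B v e₀s • (u - B u e₀s • e₀) + n u (v - B v e₀s • e₀)
        + n v (u - B u e₀s • e₀ - n u e₀) + B (π u) (π v) • e₀s := by
    refine ⟨LinearMap.mk₂ ℂ (fun u v =>
      B u e₀s • v + B v e₀s • (u - B u e₀s • e₀) + n u (v - B v e₀s • e₀)
        + n v (u - B u e₀s • e₀ - n u e₀) + B (π u) (π v) • e₀s) ?_ ?_ ?_ ?_, fun u v => rfl⟩
    all_goals
      intros
      simp only [map_add, map_sub, map_smul, LinearMap.add_apply, LinearMap.smul_apply,
        smul_eq_mul]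
      module
  have mcomm : ∀ u v, m u v = m v u := by
    intro u v
    rw [hm, hm, hsymm (π u)]
    simp only [map_sub, map_smul, hncomm u v e₀]
    module
  have m0 : ∀ v, m e₀ v = v := by
    intro v
    rw [hm, hpair, hn0 0 (by norm_num) e₀ he₀, hπ0 0 (by norm_num) e₀ he₀]
    simp
  have m1 : ∀ u ∈ W 1, ∀ v, m u v = n u v := by
    intro u hu v
    rw [hm, hε 1 (by norm_num) u hu, hπ0 1 (by norm_num) u hu, hn1 u hu]
    simp [hn1 u hu]
  have mge2 : ∀ p ≥ 2, ∀ q ≥ 2, ∀ u ∈ W p, ∀ v ∈ W q, m u v = B (π u) (π v) • e₀s := by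
    intro p hp q hq u hu v hv
    rw [hm, hε p (by omega) u hu, hε q (by omega) v hv, hn0 p (by omega) u hu,
      hn0 q (by omega) v hv]
    simp
  have m2 : ∀ u ∈ W 2, ∀ v ∈ W 2, m u v = B u v • e₀s := by
    intro u hu v hv
    rw [mge2 2 le_rfl 2 le_rfl u hu v hv, hπ u hu, hπ v hv]
  have mmem : ∀ p q : ℕ, ∀ u ∈ W p, ∀ v ∈ W q, m u v ∈ W (p + q) := by
    have a0 : ∀ q, ∀ u ∈ W 0, ∀ v ∈ W q, m u v ∈ W q := by
      intro q u hu v hv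
      obtain ⟨c, rfl⟩ := h0 u hu
      simpa [m0] using Submodule.smul_mem _ c hv
    have a1 : ∀ q, ∀ u ∈ W 1, ∀ v ∈ W q, m u v ∈ W (q + 1) := by
      intro q u hu v hv
      rw [m1 u hu]
      exact hndeg u q v hv
    intro p q u hu v hv
    obtain rfl | rfl | rfl | rfl | ⟨rfl, rfl⟩ | ⟨hp, hq, hpq⟩ :
        p = 0 ∨ p = 1 ∨ q = 0 ∨ q = 1 ∨ (p = 2 ∧ q = 2) ∨
          (p ≥ 2 ∧ q ≥ 2 ∧ (p ≠ 2 ∨ q ≠ 2)) := by omega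
    · rw [zero_add]; exact a0 q u hu v hv
    · rw [add_comm]; exact a1 q u hu v hv
    · rw [mcomm, add_zero]; exact a0 p v hv u hu
    · rw [mcomm]; exact a1 p v hv u hu
    · rw [m2 u hu v hv]; exact Submodule.smul_mem _ _ he₀s
    · have : m u v = 0 := by
        rw [mge2 p hp q hq u hu v hv]
        rcases hpq with h | h
        · simp [hπ0 p h u hu]
        · simp [hπ0 q h v hv]
      rw [this]; exact zero_mem _
  have massoc : ∀ u v w, m (m u v) w = m u (m v w) := by
    intro u v w
    induction u using homogeneous_induction hW hbd with
    | add x y hx hy => simp [hx, hy]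
    | hom p hp u hu =>
    induction v using homogeneous_induction hW hbd with
    | add x y hx hy => simp [hx, hy]
    | hom q hq v hv =>
    induction w using homogeneous_induction hW hbd with
    | add x y hx hy => simp [hx, hy]
    | hom s hs w hw =>
    by_cases hd : 4 < p + q + s
    · have a := mmem _ _ _ (mmem p q u hu v hv) w hw
      have b := mmem _ _ u hu _ (mmem q s v hv w hw)
      rw [← add_assoc] at b
      rw [hbd _ hd, Submodule.mem_bot] at a b
      rw [a, b]
    obtain rfl | rfl | rfl | ⟨rfl, rfl, rfl⟩ | ⟨rfl, rfl, rfl⟩ | ⟨rfl, rfl, rfl⟩ | ⟨rfl, rfl, rfl⟩ :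
        p = 0 ∨ q = 0 ∨ s = 0 ∨ (p = 1 ∧ q = 1 ∧ s = 1) ∨ (p = 1 ∧ q = 1 ∧ s = 2) ∨
          (p = 1 ∧ q = 2 ∧ s = 1) ∨ (p = 2 ∧ q = 1 ∧ s = 1) := by omega
    · obtain ⟨c, rfl⟩ := h0 u hu
      simp [m0]
    · obtain ⟨c, rfl⟩ := h0 v hv
      simp [m0, mcomm u e₀]
    · obtain ⟨c, rfl⟩ := h0 w hw
      simp [m0, mcomm _ e₀]
    · rw [mcomm _ w, m1 w hw, m1 u hu, m1 u hu, m1 v hv, hncomm w u]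
      conv_lhs => rw [← hn1 v hv]
      conv_rhs => rw [← hn1 w hw]
      rw [hncomm w v]
    · rw [m1 u hu, m1 u hu, m1 v hv, m2 _ (hndeg u 1 v hv) w hw,
        h4 _ (hndeg u 3 _ (hndeg v 2 w hw)), hnadj, hnadj, hnadj, hsymm v, hnadj,
        hncomm v, hn1 v hv]
    · rw [mcomm _ w, m1 w hw, m1 u hu, m1 u hu, mcomm v w, m1 w hw, hncomm]
    · rw [mcomm _ w, m1 w hw, mcomm u v, m1 v hv, m1 v hv, m2 u hu _ (hndeg v 1 w hw),
        h4 _ (hndeg w 3 _ (hndeg v 2 u hu)), hnadj, hnadj, hn1 w hw]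
  have mtrace : ∀ u v, B u v = B (m u v) e₀ := by
    intro u v
    induction u using homogeneous_induction hW hbd with
    | add x y hx hy => simp [hx, hy]
    | hom p hp u hu =>
    induction v using homogeneous_induction hW hbd with
    | add x y hx hy => simp [hx, hy]
    | hom q hq v hv =>
    by_cases hpq : p + q = 4
    · obtain rfl | rfl | rfl | rfl | ⟨rfl, rfl⟩ :
          p = 0 ∨ p = 1 ∨ q = 0 ∨ q = 1 ∨ (p = 2 ∧ q = 2) := by omega
      · obtain ⟨c, rfl⟩ := h0 u hu
        simp [m0, hsymm v]
      · rw [m1 u hu, hnadj, hn1 u hu, hsymm]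
      · obtain ⟨c, rfl⟩ := h0 v hv
        simp [mcomm u, m0]
      · rw [mcomm, m1 v hv, hnadj, hn1 v hv]
      · rw [m2 u hu v hv]
        simp [hsymm e₀s, hpair]
    · rw [horth p q hpq u hu v hv,
        horth (p + q) 0 (by omega) _ (mmem p q u hu v hv) e₀ he₀]
  have mfrob : IsGradedFrobenius 4 W m e₀ B :=
    { finite := inferInstance
      comm := mcomm
      assoc := massoc
      one_mul := m0
      symm := hsymm
      nondeg := hnd
      frob := fun u v w => by rw [mtrace (m u v), massoc, ← mtrace]
      internal := hW
      bounded := hbd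
      dim_bottom := hdim
      unit_mem := he₀
      mul_mem := mmem
      orthogonal := horth }
  have mN : ∀ j v, m (N j e₀) v = N j v := fun j v => by
    rw [m1 _ (hdeg j 0 e₀ he₀), hnN]
  refine ⟨m, ⟨mfrob, mN, m2⟩, ?_⟩
  rintro m' ⟨hf, hN, h2⟩
  exact frobenius_product_unique h0 hspan hf mfrob hN mN h2 m2

end Construction

/-- Proposition `prop:constant_prod_from_nilpotent`: Let `V = ⊕_{p=0}^4 V^p`
(`Vup p` plays the role of `V^p`), `Q` a nondegenerate symmetric bilinear form with
`Q(V^p, V^q) = 0` for `p + q ≠ 4`, and `N₁,…,N_r` pairwise commuting endomorphisms with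
`N_j(V^p) ⊆ V^{p−1}` (`V^{−1} = 0`) which are infinitesimal isometries of `Q`.  Assume
`dim V^4 = 1`, fix `0 ≠ e₀ ∈ V^4` and `e₀* ∈ V^0` with `Q(e₀,e₀*) = 1`, and assume
`N₁(e₀),…,N_r(e₀)` form a basis of `V^3`.  Give `V` the grading `V_{2a} := V^{4−a}` and let
`B(u,v) := (−1)^a Q(u,v)` for `u ∈ V_{2a}`.  Then there is a unique product `*` on `V` making
`(V,*,e₀,B)` a graded Frobenius algebra of weight `4` with `N_j(e₀) * v = N_j(v)` and
`v₁ * v₂ = B(v₁,v₂) e₀*` for `v₁, v₂ ∈ V^2`. -/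
theorem statement4 {V : Type*} [AddCommGroup V] [Module ℂ V] [FiniteDimensional ℂ V]
    (r : ℕ) (Vup : ℕ → Submodule ℂ V)
    (hinternal : DirectSum.IsInternal Vup)
    (hbounded : ∀ p : ℕ, 4 < p → Vup p = ⊥)
    (Q : V →ₗ[ℂ] V →ₗ[ℂ] ℂ)
    (hQsymm : ∀ u v : V, Q u v = Q v u)
    (hQnondeg : ∀ u : V, (∀ v : V, Q u v = 0) → u = 0)
    (hQorth : ∀ p q : ℕ, p + q ≠ 4 → ∀ u ∈ Vup p, ∀ v ∈ Vup q, Q u v = 0)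
    (N : Fin r → (V →ₗ[ℂ] V))
    (hNcomm : ∀ i j, ∀ v : V, N i (N j v) = N j (N i v))
    (hNdeg : ∀ j, ∀ p : ℕ, ∀ v ∈ Vup (p + 1), N j v ∈ Vup p)
    (hNbot : ∀ j, ∀ v ∈ Vup 0, N j v = 0)
    (hNinf : ∀ j, ∀ u v : V, Q (N j u) v + Q u (N j v) = 0)
    (hdim4 : Module.finrank ℂ (Vup 4) = 1)
    (e₀ : V) (he₀ : e₀ ∈ Vup 4) (he₀ne : e₀ ≠ 0)
    (e₀s : V) (he₀s : e₀s ∈ Vup 0) (hpair : Q e₀ e₀s = 1)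
    (hbasis₁ : LinearIndependent ℂ (fun j : Fin r => N j e₀))
    (hbasis₂ : Submodule.span ℂ (Set.range fun j : Fin r => N j e₀) = Vup 3)
    -- `B` is the form `B(u,v) = (−1)^a Q(u,v)` for `u ∈ V_{2a} = V^{4−a}`
    (B : V →ₗ[ℂ] V →ₗ[ℂ] ℂ)
    (hB : ∀ a : Fin 5, ∀ u ∈ Vup (4 - (a : ℕ)), ∀ v : V,
      B u v = (-1 : ℂ) ^ (a : ℕ) * Q u v) :
    ∃! mul : V →ₗ[ℂ] V →ₗ[ℂ] V,
      IsGradedFrobenius 4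
        (fun a : ℕ => if a ≤ 4 then Vup (4 - a) else ⊥) mul e₀ B ∧
      (∀ j : Fin r, ∀ v : V, mul (N j e₀) v = N j v) ∧
      (∀ v₁ ∈ Vup 2, ∀ v₂ ∈ Vup 2, mul v₁ v₂ = B v₁ v₂ • e₀s) := by
  set W : ℕ → Submodule ℂ V := fun a => if a ≤ 4 then Vup (4 - a) else ⊥ with hWdef
  have W4 : ∀ a ≤ 4, W a = Vup (4 - a) := fun a ha => if_pos ha
  have hbd : ∀ p, 4 < p → W p = ⊥ := fun p hp => if_neg (by omega)
  -- `W` is `Vup` reindexed by the involution `a ↦ 4 - a` of `{0, …, 4}`.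
  have hW : DirectSum.IsInternal W := by
    let f : ℕ → ℕ := fun a => if a ≤ 4 then 4 - a else a
    have hf : Function.Involutive f := by
      intro a
      simp only [f]
      split_ifs <;> omega
    have hWf : W = Vup ∘ f := by
      funext a
      by_cases ha : a ≤ 4
      · simp [f, ha, W4]
      · simp [f, ha, hbd a (by omega), hbounded a (by omega)]
    rw [DirectSum.isInternal_submodule_iff_iSupIndep_and_iSup_eq_top, hWf]
    refine ⟨hinternal.submodule_iSupIndep.comp hf.injective, ?_⟩
    rw [← hinternal.submodule_iSup_eq_top]
    exact hf.surjective.iSup_comp Vup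
  have hBW : ∀ p ≤ 4, ∀ u ∈ W p, ∀ v, B u v = (-1 : ℂ) ^ p * Q u v := by
    intro p hp u hu v
    rw [W4 p hp] at hu
    exact hB ⟨p, by omega⟩ u hu v
  have hQW : ∀ p ≤ 4, ∀ q ≤ 4, p + q ≠ 4 → ∀ u ∈ W p, ∀ v ∈ W q, Q u v = 0 := by
    intro p hp q hq hpq u hu v hv
    rw [W4 p hp] at hu
    rw [W4 q hq] at hv
    exact hQorth _ _ (by omega) u hu v hv
  have horth : ∀ p q : ℕ, p + q ≠ 4 → ∀ u ∈ W p, ∀ v ∈ W q, B u v = 0 := by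
    intro p q hpq u hu v hv
    by_cases hp : p ≤ 4
    · by_cases hq : q ≤ 4
      · rw [hBW p hp u hu, hQW p hp q hq hpq u hu v hv, mul_zero]
      · rw [hbd q (by omega), Submodule.mem_bot] at hv
        simp [hv]
    · rw [hbd p (by omega), Submodule.mem_bot] at hu
      simp [hu]
  have hdeg : ∀ j p, ∀ v ∈ W p, N j v ∈ W (p + 1) := by
    intro j p v hv
    obtain hp | rfl | hp : p < 4 ∨ p = 4 ∨ 4 < p := by omega
    · rw [W4 p hp.le, show 4 - p = (4 - (p + 1)) + 1 by omega] at hv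
      rw [W4 (p + 1) hp]
      exact hNdeg j _ v hv
    · rw [W4 4 le_rfl] at hv
      rw [hNbot j v hv]
      exact zero_mem _
    · rw [hbd p hp, Submodule.mem_bot] at hv
      simp [hv]
  have hsymm : ∀ u v, B u v = B v u := by
    intro u v
    induction u using homogeneous_induction hW hbd with
    | add x y hx hy => simp [hx, hy]
    | hom p hp u hu =>
    induction v using homogeneous_induction hW hbd with
    | add x y hx hy => simp [hx, hy]
    | hom q hq v hv =>
    by_cases hpq : p + q = 4
    · have hsign : (-1 : ℂ) ^ p = (-1) ^ q := by
        obtain rfl : q = 4 - p := by omega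
        interval_cases p <;> norm_num
      rw [hBW p hp u hu, hBW q hq v hv, hsign, hQsymm]
    · rw [horth p q hpq u hu v hv, horth q p (by omega) v hv u hu]
  have hnd : ∀ u, (∀ v, B u v = 0) → u = 0 := by
    intro u hu
    refine hQnondeg u fun v => ?_
    induction v using homogeneous_induction hW hbd with
    | add x y hx hy => simp [hx, hy]
    | hom q hq v hv =>
    have h := hu v
    rw [hsymm, hBW q hq v hv] at h
    rw [hQsymm]
    exact (mul_eq_zero.mp h).resolve_left (pow_ne_zero _ (by norm_num))
  -- The degree shift of `N j` turns skew-adjointness for `Q` into self-adjointness for `B`.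
  have hadj : ∀ j u v, B (N j u) v = B u (N j v) := by
    intro j u v
    induction u using homogeneous_induction hW hbd with
    | add x y hx hy => simp [hx, hy]
    | hom p hp u hu =>
    rw [hBW p hp u hu, eq_neg_of_add_eq_zero_right (hNinf j u v)]
    obtain hp | rfl : p < 4 ∨ p = 4 := by omega
    · rw [hBW (p + 1) hp _ (hdeg j p u hu), pow_succ]
      ring
    · rw [W4 4 le_rfl] at hu
      simp [hNbot j u hu]
  have he₀W : e₀ ∈ W 0 := by rw [W4 0 (by norm_num)]; exact he₀
  have he₀sW : e₀s ∈ W 4 := by rw [W4 4 le_rfl]; exact he₀s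
  have hpairB : B e₀ e₀s = 1 := by rw [hBW 0 (by norm_num) e₀ he₀W, hpair]; norm_num
  have hdim : Module.finrank ℂ (W 0) = 1 := by rw [W4 0 (by norm_num)]; exact hdim4
  have hspan : Submodule.span ℂ (Set.range fun j : Fin r => N j e₀) = W 1 := by
    rw [W4 1 (by norm_num)]; exact hbasis₂
  have h := existsUnique_frobenius_product hW hbd hsymm hnd horth hNcomm hdeg hadj hdim he₀W he₀sW
    hpairB hbasis₁ hspan
  rw [W4 2 (by norm_num)] at h
  exact h
end
end

section
/- Let V be a finite-dimensional ℂ-vector space, N₁,…,N_n ∈ End(V) pairwise commuting endomorphisms, U ⊆ ℂ^n open and connected, and H : U → End(V) holomorphic. Say that a holomorphic map X : U → End(V) satisfies condition (C) if for all 1 ≤ α,β ≤ n: ∂_αX·N_β − ∂_βX·N_α + N_α·∂_βX − N_β·∂_αX + ∂_αX·∂_βH − ∂_βX·∂_αH = 0 identically on U (products are compositions in End(V), ∂_α denotes the partial derivative in the α-th coordinate). Suppose H satisfies (C) and A : U → End(V) is holomorphic and satisfies (C). Then: (i) the End(V)-valued 1-form with components ω_α := A·N_α − N_α·A + A·∂_αH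 is closed, i.e. ∂_αω_β = ∂_βω_α on U for all α,β; and (ii) any holomorphic F : U → End(V) with ∂_αF = ω_α for all α also satisfies condition (C). -/
/-!
Everything takes place in the noncommutative algebra `End(V)`.

For (i), the product rule gives `∂_α ω_β - ∂_β ω_α` as the left-hand side of (C) for `A`, plus
`A · (∂_α ∂_β H - ∂_β ∂_α H)`. The second term vanishes because mixed partial derivatives of a
holomorphic map commute, and the first vanishes by hypothesis. For (ii), substituting
`∂_α F = ω_α` into (C) and using `N_α N_β = N_β N_α`, everything cancels except `A` times the
left-hand side of (C) for `H`.

The analytic input is that a Fréchet-holomorphic map of several complex variables is twice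
differentiable (`differentiableAt_fderiv_of_differentiableOn`). It is obtained by writing a
directional derivative as the Cauchy integral `(2πi)⁻¹ ∮ ζ⁻² f(u + ζ v) dζ` over a fixed small
circle and differentiating in `u` under the integral sign; the domination comes from the Schwarz
lemma, which bounds `fderiv ℂ f` locally (`exists_ball_norm_fderiv_le`).
-/

open Module

noncomputable section

/-- Condition (C) for a holomorphic map `X : U → End(V)` relative to commuting endomorphisms
`N₁,…,N_n` and a map `H : U → End(V)`:  for all `1 ≤ α, β ≤ n`,
`∂_αX·N_β − ∂_βX·N_α + N_α·∂_βX − N_β·∂_αX + ∂_αX·∂_βH − ∂_βX·∂_αH = 0` on `U`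
(products are compositions in `End(V)`). -/
def CondC {V : Type*} [NormedAddCommGroup V] [NormedSpace ℂ V] (n : ℕ)
    (U : Set (Fin n → ℂ)) (N : Fin n → (V →L[ℂ] V))
    (H : (Fin n → ℂ) → (V →L[ℂ] V)) (X : (Fin n → ℂ) → (V →L[ℂ] V)) : Prop :=
  ∀ α β : Fin n, ∀ u ∈ U,
    fderiv ℂ X u (Pi.single α 1) * N β - fderiv ℂ X u (Pi.single β 1) * N α +
      N α * fderiv ℂ X u (Pi.single β 1) - N β * fderiv ℂ X u (Pi.single α 1) +
      fderiv ℂ X u (Pi.single α 1) * fderiv ℂ H u (Pi.single β 1) -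
      fderiv ℂ X u (Pi.single β 1) * fderiv ℂ H u (Pi.single α 1) = 0

/-- Cauchy estimate: on a small ball the derivative of a holomorphic map is bounded. -/
lemma exists_ball_norm_fderiv_le {E G : Type*} [NormedAddCommGroup E] [NormedSpace ℂ E]
    [NormedAddCommGroup G] [NormedSpace ℂ G] {U : Set E} (hU : IsOpen U) {f : E → G}
    (hf : DifferentiableOn ℂ f U) {x : E} (hx : x ∈ U) :
    ∃ R > 0, ∃ C : ℝ, 0 ≤ C ∧ Metric.ball x (2 * R) ⊆ U ∧
      ∀ w ∈ Metric.ball x (2 * R), ‖fderiv ℂ f w‖ ≤ C := by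
  have hcont : ContinuousAt f x := (hf.differentiableAt (hU.mem_nhds hx)).continuousAt
  have hev : ∀ᶠ w in nhds x, w ∈ U ∧ dist (f w) (f x) < 1 :=
    (hU.eventually_mem hx).and (hcont.eventually (Metric.ball_mem_nhds (f x) one_pos))
  obtain ⟨ε, hε, hball⟩ := Metric.eventually_nhds_iff_ball.mp hev
  refine ⟨ε / 4, by positivity, 2 / (ε / 2), by positivity, ?_, ?_⟩
  · intro w hw
    exact (hball w (Metric.ball_subset_ball (by linarith) hw)).1
  · intro w hw
    have hsub : Metric.ball w (ε / 2) ⊆ Metric.ball x ε := by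
      refine Metric.ball_subset_ball' ?_
      have := Metric.mem_ball.mp hw
      linarith
    refine Complex.norm_fderiv_le_div_of_mapsTo_ball
      (hf.mono fun y hy => (hball y (hsub hy)).1) ?_ (by positivity)
    intro y hy
    have h1 := (hball y (hsub hy)).2
    have h2 := (hball w (hsub (Metric.mem_ball_self (by positivity)))).2
    have h3 := dist_triangle_right (f y) (f w) (f x)
    exact Metric.mem_closedBall.mpr (by linarith)

/-- Directional derivatives of a holomorphic map are holomorphic: the Cauchy integral formula for
`fderiv ℂ f u v` may be differentiated in `u` under the integral sign. -/
lemma differentiableAt_fderiv_apply_of_differentiableOn {E G : Type*} [NormedAddCommGroup E]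
    [NormedSpace ℂ E] [FiniteDimensional ℂ E] [NormedAddCommGroup G] [NormedSpace ℂ G]
    [FiniteDimensional ℂ G] {U : Set E} (hU : IsOpen U) {f : E → G}
    (hf : DifferentiableOn ℂ f U) {x : E} (hx : x ∈ U) (v : E) :
    DifferentiableAt ℂ (fun u => fderiv ℂ f u v) x := by
  have : CompleteSpace G := FiniteDimensional.complete ℂ G
  have : ProperSpace (E →L[ℂ] G) := FiniteDimensional.proper ℂ _
  let _ : MeasurableSpace E := borel E
  have : BorelSpace E := ⟨rfl⟩
  obtain ⟨R, hR, C, hC, hRU, hbound⟩ := exists_ball_norm_fderiv_le hU hf hx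
  obtain ⟨r, hr, hrv⟩ : ∃ r > 0, r * ‖v‖ < R := by
    refine ⟨R / (‖v‖ + 1), by positivity, ?_⟩
    rw [div_mul_eq_mul_div, div_lt_iff₀ (by positivity)]
    nlinarith [norm_nonneg v]
  have hfd : ∀ w ∈ Metric.ball x (2 * R), DifferentiableAt ℂ f w := fun w hw =>
    hf.differentiableAt (hU.mem_nhds (hRU hw))
  have hmem : ∀ u ∈ Metric.ball x R, ∀ z : ℂ, ‖z‖ ≤ r →
      u + z • v ∈ Metric.ball x (2 * R) := by
    intro u hu z hz
    rw [Metric.mem_ball, dist_eq_norm] at hu ⊢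
    calc ‖u + z • v - x‖ = ‖(u - x) + z • v‖ := by congr 1; abel
      _ ≤ ‖u - x‖ + ‖z‖ * ‖v‖ := (norm_add_le _ _).trans (by rw [norm_smul])
      _ ≤ ‖u - x‖ + r * ‖v‖ := by gcongr
      _ < 2 * R := by linarith
  have hcircle : ∀ θ : ℝ, ‖circleMap 0 r θ‖ ≤ r := fun θ => by
    rw [norm_circleMap_zero, abs_of_pos hr]
  have hne : ∀ θ : ℝ, circleMap 0 r θ ≠ 0 := fun θ => circleMap_ne_center hr.ne'
  -- The weight `(dζ/dθ) / ζ²` of the Cauchy integral over the circle `ζ = r exp(iθ)`.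
  let c : ℝ → ℂ := fun θ => deriv (circleMap 0 r) θ * ((circleMap 0 r θ - 0) ^ 2)⁻¹
  have hc : Continuous c := by
    refine Continuous.mul ?_ (Continuous.inv₀ (by fun_prop) fun θ => by simpa using hne θ)
    rw [funext (deriv_circleMap 0 r)]
    fun_prop
  have hcauchy : ∀ u ∈ Metric.ball x R, fderiv ℂ f u v =
      (2 * Real.pi * Complex.I : ℂ)⁻¹ •
        ∫ θ in (0 : ℝ)..2 * Real.pi, c θ • f (u + circleMap 0 r θ • v) := by
    intro u hu
    have hopen : IsOpen {z : ℂ | u + z • v ∈ Metric.ball x (2 * R)} :=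
      Metric.isOpen_ball.preimage (by fun_prop)
    have hd : DifferentiableOn ℂ (fun z : ℂ => f (u + z • v))
        {z : ℂ | u + z • v ∈ Metric.ball x (2 * R)} := fun z hz =>
      (DifferentiableAt.comp z (hfd _ hz) (by fun_prop :
        DifferentiableAt ℂ (fun z : ℂ => u + z • v) z)).differentiableWithinAt
    have key := Complex.two_pi_I_inv_smul_circleIntegral_sub_sq_inv_smul_of_differentiable
      hopen (c := 0) (w₀ := 0) (R := r)
      (fun z hz => hmem u hu z (by simpa using hz)) hd (Metric.mem_ball_self hr)
    have hderiv : HasDerivAt (fun z : ℂ => f (u + z • v)) (fderiv ℂ f u v) 0 := by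
      have h1 : HasDerivAt (fun z : ℂ => u + z • v) v 0 := by
        simpa using ((hasDerivAt_id (0 : ℂ)).smul_const v).const_add u
      have h2 : HasFDerivAt f (fderiv ℂ f u) (u + (0 : ℂ) • v) := by
        have := (hfd _ (hmem u hu 0 (by simpa using hr.le))).hasFDerivAt
        simpa using this
      exact h2.comp_hasDerivAt 0 h1
    rw [← hderiv.deriv, ← key, circleIntegral]
    simp only [c, smul_smul]
  have hint : ∀ u ∈ Metric.ball x R, Continuous fun θ => c θ • f (u + circleMap 0 r θ • v) := by
    intro u hu
    refine hc.smul (continuous_iff_continuousAt.mpr fun θ => ?_)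
    exact ContinuousAt.comp (f := fun θ : ℝ => u + circleMap 0 r θ • v)
      (hfd _ (hmem u hu _ (hcircle θ))).continuousAt
      (by fun_prop : Continuous fun θ : ℝ => u + circleMap 0 r θ • v).continuousAt
  have hball : Metric.ball x R ∈ nhds x := Metric.ball_mem_nhds x hR
  have hdiff := intervalIntegral.hasFDerivAt_integral_of_dominated_of_fderiv_le (𝕜 := ℂ)
    (μ := MeasureTheory.volume) (a := 0) (b := 2 * Real.pi)
    (F := fun u θ => c θ • f (u + circleMap 0 r θ • v))
    (F' := fun u θ => c θ • fderiv ℂ f (u + circleMap 0 r θ • v))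
    (bound := fun θ => ‖c θ‖ * C) hball
    (by filter_upwards [hball] with u hu using (hint u hu).aestronglyMeasurable)
    ((hint x (Metric.mem_ball_self hR)).intervalIntegrable _ _)
    (by
      have hm : Measurable fun θ : ℝ => fderiv ℂ f (x + circleMap 0 r θ • v) :=
        (measurable_fderiv ℂ f).comp
          (by fun_prop : Continuous fun θ : ℝ => x + circleMap 0 r θ • v).measurable
      exact hc.aestronglyMeasurable.smul hm.aestronglyMeasurable)
    (Filter.Eventually.of_forall fun θ _ u hu => by
      rw [norm_smul]
      exact mul_le_mul_of_nonneg_left (hbound _ (hmem u hu _ (hcircle θ))) (norm_nonneg _))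
    ((by fun_prop : Continuous fun θ => ‖c θ‖ * C).intervalIntegrable _ _)
    (Filter.Eventually.of_forall fun θ _ u hu => by
      have h := (hfd _ (hmem u hu _ (hcircle θ))).hasFDerivAt
      exact ((hasFDerivAt_comp_add_right (circleMap 0 r θ • v)).mpr h).const_smul (c θ))
  refine (hdiff.differentiableAt.const_smul
    (2 * Real.pi * Complex.I : ℂ)⁻¹).congr_of_eventuallyEq ?_
  filter_upwards [hball] with u hu using hcauchy u hu

/-- A holomorphic map on an open subset of `ℂⁿ` is twice differentiable, since its derivative is a
finite sum assembled from the partial derivatives. -/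
lemma differentiableAt_fderiv_of_differentiableOn {G : Type*} [NormedAddCommGroup G]
    [NormedSpace ℂ G] [FiniteDimensional ℂ G] {n : ℕ} {U : Set (Fin n → ℂ)} (hU : IsOpen U)
    {f : (Fin n → ℂ) → G} (hf : DifferentiableOn ℂ f U) {x : Fin n → ℂ} (hx : x ∈ U) :
    DifferentiableAt ℂ (fderiv ℂ f) x := by
  have hsum : fderiv ℂ f = fun u => ∑ i : Fin n,
      (ContinuousLinearMap.smulRightL ℂ (Fin n → ℂ) G
        (ContinuousLinearMap.proj (R := ℂ) (φ := fun _ : Fin n => ℂ) i))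
        (fderiv ℂ f u (Pi.single i 1)) := by
    funext u
    ext w
    conv_lhs => rw [pi_eq_sum_univ' w, map_sum]
    simp
  rw [hsum]
  refine DifferentiableAt.fun_sum fun i _ => ?_
  exact (ContinuousLinearMap.differentiableAt _).comp x
    (differentiableAt_fderiv_apply_of_differentiableOn hU hf hx (Pi.single i 1))

/-- Mixed partial derivatives of a holomorphic map commute. -/
lemma fderiv_fderiv_comm_of_differentiableOn {G : Type*} [NormedAddCommGroup G]
    [NormedSpace ℂ G] [FiniteDimensional ℂ G] {n : ℕ} {U : Set (Fin n → ℂ)} (hU : IsOpen U)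
    {f : (Fin n → ℂ) → G} (hf : DifferentiableOn ℂ f U) {x : Fin n → ℂ} (hx : x ∈ U)
    (v w : Fin n → ℂ) :
    fderiv ℂ (fderiv ℂ f) x v w = fderiv ℂ (fderiv ℂ f) x w v := by
  refine second_derivative_symmetric_of_eventually (f := f) (f' := fderiv ℂ f) ?_
    (differentiableAt_fderiv_of_differentiableOn hU hf hx).hasFDerivAt v w
  filter_upwards [hU.mem_nhds hx] with y hy
  exact (hf.differentiableAt (hU.mem_nhds hy)).hasFDerivAt

/-- the inductive step in the proof of Theorem `th:improved_2.8`: let `V` be a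
finite-dimensional `ℂ`-vector space, `N₁,…,N_n` pairwise commuting endomorphisms,
`U ⊆ ℂ^n` open and connected, and `H : U → End(V)` holomorphic satisfying condition (C).
If `A : U → End(V)` is holomorphic and satisfies (C), then:
(i) the `End(V)`-valued 1-form `ω_α := A·N_α − N_α·A + A·∂_αH` is closed
(`∂_αω_β = ∂_βω_α` on `U`), and
(ii) any holomorphic `F : U → End(V)` with `∂_αF = ω_α` for all `α` also satisfies (C). -/
theorem statement6 {V : Type*} [NormedAddCommGroup V] [NormedSpace ℂ V]
    [FiniteDimensional ℂ V]
    (n : ℕ) (N : Fin n → (V →L[ℂ] V))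
    (hNcomm : ∀ i j, Commute (N i) (N j))
    (U : Set (Fin n → ℂ)) (hUopen : IsOpen U) (hUconn : IsConnected U)
    (H : (Fin n → ℂ) → (V →L[ℂ] V))
    (hHhol : DifferentiableOn ℂ H U)
    (hHC : CondC n U N H H)
    (A : (Fin n → ℂ) → (V →L[ℂ] V))
    (hAhol : DifferentiableOn ℂ A U)
    (hAC : CondC n U N H A)
    -- the 1-form `ω_α = A·N_α − N_α·A + A·∂_αH`
    (ω : Fin n → (Fin n → ℂ) → (V →L[ℂ] V))
    (hω : ∀ α : Fin n, ∀ u : Fin n → ℂ,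
      ω α u = A u * N α - N α * A u + A u * fderiv ℂ H u (Pi.single α 1)) :
    (∀ α β : Fin n, ∀ u ∈ U,
      fderiv ℂ (ω β) u (Pi.single α 1) = fderiv ℂ (ω α) u (Pi.single β 1)) ∧
    (∀ F : (Fin n → ℂ) → (V →L[ℂ] V), DifferentiableOn ℂ F U →
      (∀ α : Fin n, ∀ u ∈ U, fderiv ℂ F u (Pi.single α 1) = ω α u) →
      CondC n U N H F) := by
  refine ⟨fun α β u hu => ?_, fun F _ hF α β u hu => ?_⟩
  · have hA : HasFDerivAt A (fderiv ℂ A u) u :=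
      (hAhol.differentiableAt (hUopen.mem_nhds hu)).hasFDerivAt
    have hH2 : HasFDerivAt (fderiv ℂ H) (fderiv ℂ (fderiv ℂ H) u) u :=
      (differentiableAt_fderiv_of_differentiableOn hUopen hHhol hu).hasFDerivAt
    have hder : ∀ (γ : Fin n) (v : Fin n → ℂ), fderiv ℂ (ω γ) u v =
        fderiv ℂ A u v * N γ - N γ * fderiv ℂ A u v +
          (A u * fderiv ℂ (fderiv ℂ H) u v (Pi.single γ 1) +
            fderiv ℂ A u v * fderiv ℂ H u (Pi.single γ 1)) := by
      intro γ v
      have h := ((hA.mul_const' (N γ)).sub (hA.const_mul (N γ))).add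
        (hA.mul' (hH2.clm_apply (hasFDerivAt_const (Pi.single γ (1 : ℂ)) u)))
      rw [HasFDerivAt.fderiv (h.congr_of_eventuallyEq (Filter.Eventually.of_forall (hω γ)))]
      simp
    rw [hder, hder, fderiv_fderiv_comm_of_differentiableOn hUopen hHhol hu
      (Pi.single β 1) (Pi.single α 1), ← sub_eq_zero, ← hAC α β u hu]
    abel
  · have hN : N α * N β = N β * N α := hNcomm α β
    -- The left-hand side of (C) for `F` equals `A u` times that of (C) for `H`.
    have hH := congrArg (fun T => A u * T) (hHC α β u hu)
    simp only [mul_zero] at hH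
    rw [hF α u hu, hF β u hu, hω, hω, ← hH]
    have h1 : A u * N α * N β = A u * N β * N α := by rw [mul_assoc, hN, mul_assoc]
    have h2 : N α * (N β * A u) = N β * (N α * A u) := by rw [← mul_assoc, hN, mul_assoc]
    simp only [mul_add, mul_sub, add_mul, sub_mul, h1, h2]
    simp only [mul_assoc]
    abel
end
end

section
/- Let V = ⊕_{p=0}^4 V_{2p} be a finite-dimensional graded ℂ-vector space, B a nondegenerate symmetric bilinear form on V with B(V_{2p},V_{2q}) = 0 whenever p+q ≠ 4, and e₀ ∈ V₀. If *₁ and *₂ are two products on V such that both (V,*₁,e₀,B) and (V,*₂,e₀,B) are graded Frobenius algebras of weight 4, and w *₁ v = w *₂ v for every w ∈ V₂ and every v ∈ V, then *₁ = *₂; that is, a weight-4 graded Frobenius product is uniquely determined by B, the unit e₀, and the multiplication operators by elements of V₂. -/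
/-! The product is recovered from the trilinear form `(u, v, w) ↦ B (u * v) w` by nondegeneracy
of `B`, and this form is invariant under permutations of its arguments. On homogeneous arguments
of degrees `p, q, r` there are two cases. If one degree is `0` or `1`, the argument of that degree
can be moved to the front, where its multiplication operator is prescribed (`V₀` is spanned by the
unit). If all degrees are at least `2`, then `p + q + r ≥ 6 > 4`, so the form vanishes. -/

open Module

noncomputable section

/-- Elements of degree `0` are multiples of the unit, so they act by scalars that depend on
neither product; in degree `1` the agreement is the hypothesis. -/
lemma mul_eq_of_degree_le_one {V : Type*} [AddCommGroup V] [Module ℂ V]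
    {W : ℕ → Submodule ℂ V} {e₀ : V} {B : V →ₗ[ℂ] V →ₗ[ℂ] ℂ}
    {mul₁ mul₂ : V →ₗ[ℂ] V →ₗ[ℂ] V}
    (h₁ : IsGradedFrobenius 4 W mul₁ e₀ B) (h₂ : IsGradedFrobenius 4 W mul₂ e₀ B)
    (hagree : ∀ w ∈ W 1, ∀ v : V, mul₁ w v = mul₂ w v)
    {p : ℕ} (hp : p < 2) {u : V} (hu : u ∈ W p) (v : V) : mul₁ u v = mul₂ u v := by
  interval_cases p
  · have he : e₀ ≠ 0 := by
      rintro rfl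
      have hV : ∀ x : V, x = 0 := fun x => by simpa using (h₁.one_mul x).symm
      have : Subsingleton (W 0) := ⟨fun a b => Subtype.ext ((hV a).trans (hV b).symm)⟩
      have hdim := h₁.dim_bottom
      rw [Module.finrank_zero_of_subsingleton] at hdim
      omega
    obtain ⟨c, hc⟩ := exists_smul_eq_of_finrank_eq_one h₁.dim_bottom
      (x := (⟨e₀, h₁.unit_mem⟩ : W 0)) (by simpa [Subtype.ext_iff] using he) ⟨u, hu⟩
    have hcu : c • e₀ = u := congrArg Subtype.val hc
    simp [← hcu, h₁.one_mul, h₂.one_mul]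
  · exact hagree u hu v

/-- Linear maps that agree on every homogeneous component are equal. -/
lemma linearMap_ext_homogeneous {V M : Type*} [AddCommGroup V] [Module ℂ V]
    [AddCommGroup M] [Module ℂ M] {W : ℕ → Submodule ℂ V} (hW : DirectSum.IsInternal W)
    {f g : V →ₗ[ℂ] M} (h : ∀ p, ∀ u ∈ W p, f u = g u) : f = g := by
  have hle : (⨆ p, W p) ≤ LinearMap.eqLocus f g := iSup_le h
  rw [hW.submodule_iSup_eq_top] at hle
  exact LinearMap.ext fun u => hle (Submodule.mem_top (x := u))

/-- A weight-4 graded Frobenius product is determined by the bilinear form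
`B`, the unit `e₀`, and the multiplication operators by elements of `V₂`: if `*₁` and `*₂`
both make `(V, *ᵢ, e₀, B)` a graded Frobenius algebra of weight 4 (for the same grading) and
`w *₁ v = w *₂ v` for all `w ∈ V₂` and all `v ∈ V`, then `*₁ = *₂`. -/
theorem statement18 {V : Type*} [AddCommGroup V] [Module ℂ V]
    (W : ℕ → Submodule ℂ V) (e₀ : V) (B : V →ₗ[ℂ] V →ₗ[ℂ] ℂ)
    (mul₁ mul₂ : V →ₗ[ℂ] V →ₗ[ℂ] V)
    (hFrob₁ : IsGradedFrobenius 4 W mul₁ e₀ B)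
    (hFrob₂ : IsGradedFrobenius 4 W mul₂ e₀ B)
    (hagree : ∀ w ∈ W 1, ∀ v : V, mul₁ w v = mul₂ w v) :
    mul₁ = mul₂ := by
  -- By nondegeneracy it suffices to compare the trilinear forms on homogeneous arguments.
  suffices key : ∀ p, ∀ u ∈ W p, ∀ q, ∀ v ∈ W q, ∀ r, ∀ w ∈ W r,
      B (mul₁ u v) w = B (mul₂ u v) w by
    refine linearMap_ext_homogeneous hFrob₁.internal fun p u hu =>
      linearMap_ext_homogeneous hFrob₁.internal fun q v hv => ?_
    have hB : B (mul₁ u v) = B (mul₂ u v) :=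
      linearMap_ext_homogeneous hFrob₁.internal (key p u hu q v hv)
    refine sub_eq_zero.mp (hFrob₁.nondeg _ fun w => ?_)
    rw [map_sub, hB, sub_self, LinearMap.zero_apply]
  intro p u hu q v hv r w hw
  by_cases hp : p < 2
  · rw [mul_eq_of_degree_le_one hFrob₁ hFrob₂ hagree hp hu]
  by_cases hq : q < 2
  · rw [hFrob₁.comm, hFrob₂.comm, mul_eq_of_degree_le_one hFrob₁ hFrob₂ hagree hq hv]
  by_cases hr : r < 2
  · rw [hFrob₁.frob, hFrob₂.frob, hFrob₁.comm v w, hFrob₂.comm v w,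
      mul_eq_of_degree_le_one hFrob₁ hFrob₂ hagree hr hw]
  rw [hFrob₁.orthogonal (p + q) r (by omega) _ (hFrob₁.mul_mem p q u hu v hv) w hw,
    hFrob₁.orthogonal (p + q) r (by omega) _ (hFrob₂.mul_mem p q u hu v hv) w hw]
end
end
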